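/- arXiv:2507.04355 — 6 statements merged into one kernel-verified Lean document; each statement's English description precedes it below -/
import Mathlib

section
/- Two parameters m and m' are relevant if and only if Λ(η,a;m,m') ≥ 0 and Λ(η,a;m',m) ≥ 0 for every η ∈ P and every a ∈ ℤ_{>0}. -/
/-!
Write `X_s(η, a) = Σ_{k ≥ 0} m(D^k η, a + s k)` and `Y_s` for the same tail sum of `m'`, with `s = 2`
on `P_disc` (where `D` is the identity) and `s = 1` on `P_cmpl`.  Then
`Λ(η, a; m, m') = X_s(η, a) - Y_s(η, a + 1)` (`Lam_disc`, `Lam_cmpl`), and `X_s`, `Y_s` are determined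
by the recursion `X_s(η, a) = m(η, a) + X_s(D η, a + s)` together with vanishing for large `a`.

If `m`, `m'` are relevant, the sums telescope: on `P_disc`
`Λ(η, a; m, m') = f_J(η, a)` and `Λ(η, a; m', m) = f_I(η, a - 1) + m₀(η, a)`, while on `P_cmpl`
`Λ(η, a; m, m') = f_J(η, a) + f_J(D η, a + 1) + f_K(η, a)` and
`Λ(η, a; m', m) = f_I(η, a - 1) + f_I(D η, a) + f_K(D η, a) + m₀(η, a)`.
All of these are nonnegative.

Conversely, on `P_disc` these formulas can be solved for `f_I`, `f_J`, `m₀`.  On `P_cmpl` the summands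
of `m` lie on chains `(D^k η, a + k)`, and `f_I`, `f_J`, `f_K` send a chain of `m` to one chain of `m'`,
changing the level `a` by `+1`, `-1`, `0`.  List the summands of each chain by decreasing level and
match the `n`-th one of `m` with the `n`-th one of `m'`: the inequalities on `Λ` say exactly that
matched levels differ by at most one, with only summands at level one left unmatched.
The summands of `m` at level `a` have ranks in the interval `(X_1(D η, a + 1), X_1(η, a)]`, those of `m'`
in `(Y_1(η, a + 1), Y_1(D η, a)]`, so the numbers of pairs of each kind are lengths of intersections of
such intervals, given by the formulas of `upPart`, `downPart`, `flatPart`.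
-/

open scoped Classical

/-- A parameter: a finitely supported multiplicity function on `P × ℤ_{>0}`,
encoded as a function on `P × ℕ` vanishing at index `0`. -/
structure Param (P : Type*) where
  m : P → ℕ → ℕ
  zero : ∀ η, m η 0 = 0
  finite : {p : P × ℕ | m p.1 p.2 ≠ 0}.Finite

/-- A parameter is generic if all multiplicities with `a ≥ 2` vanish. -/
def Param.Generic {P : Type*} (m : Param P) : Prop :=
  ∀ η a, 2 ≤ a → m.m η a = 0

/-- The alternating sum `Λ(η, a; m, m')`: for `η ∈ P_disc` it is
`Σ_{k ≥ 0} (m(η, a+2k) - m'(η, a+2k+1))`, and for `η ∈ P_cmpl` (the complement)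
it is `Σ_{k ≥ 0} (m(D^k η, a+k) - m'(D^k η, a+k+1))`. -/
noncomputable def Lam {P : Type*} (Pdisc : Set P) (D : P → P)
    (m m' : Param P) (η : P) (a : ℕ) : ℤ :=
  if η ∈ Pdisc then
    ∑ᶠ k : ℕ, ((m.m η (a + 2 * k) : ℤ) - (m'.m η (a + 2 * k + 1) : ℤ))
  else
    ∑ᶠ k : ℕ, ((m.m (D^[k] η) (a + k) : ℤ) - (m'.m (D^[k] η) (a + k + 1) : ℤ))

/-- Parameters `m` and `m'` are relevant: there are finitely supported functions
`f_I, f_J, f_K` and a generic parameter `m₀` with `f_I + f_J + f_K = m`,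
`f_K` vanishing on `P_disc`, and
`m'(η,a) = f_I(η,a-1) + f_J(η,a+1) + f_K(D η,a) + m₀(η,a)` for all `η` and `a ≥ 1`
(where `f_I(η,0)` is read as `0`). -/
def Relevant {P : Type*} (Pdisc : Set P) (D : P → P) (m m' : Param P) : Prop :=
  ∃ fI fJ fK m₀ : Param P, m₀.Generic ∧
    (∀ η a, fI.m η a + fJ.m η a + fK.m η a = m.m η a) ∧
    (∀ η ∈ Pdisc, ∀ a, fK.m η a = 0) ∧
    (∀ η a, 1 ≤ a →
      m'.m η a = fI.m η (a - 1) + fJ.m η (a + 1) + fK.m (D η) a + m₀.m η a)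

namespace RelevantParam

variable {P : Type*}

/-! ### Tail sums -/

theorem exists_bound (m : Param P) : ∃ N, ∀ η a, N ≤ a → m.m η a = 0 := by
  obtain ⟨N, hN⟩ := (m.finite.image Prod.snd).bddAbove
  refine ⟨N + 1, fun η a ha => ?_⟩
  by_contra h
  have : a ≤ N := hN ⟨(η, a), h, rfl⟩
  omega

/-- The tail sum `Σ_{k ≥ 0} m(D^k η, a + s k)`. -/
noncomputable def tail (D : P → P) (s : ℕ) (m : Param P) (η : P) (a : ℕ) : ℤ :=
  ∑ᶠ k : ℕ, (m.m (D^[k] η) (a + s * k) : ℤ)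

theorem tail_term_eq_zero {D : P → P} {s : ℕ} (hs : 1 ≤ s) {m : Param P} {N : ℕ}
    (hN : ∀ η a, N ≤ a → m.m η a = 0) (η : P) (a k : ℕ) (hk : N ≤ k) :
    (m.m (D^[k] η) (a + s * k) : ℤ) = 0 := by
  have : k ≤ s * k := Nat.le_mul_of_pos_left k hs
  rw [hN _ _ (by omega)]
  rfl

theorem tail_support {D : P → P} {s : ℕ} (hs : 1 ≤ s) (m : Param P) (η : P) (a : ℕ) :
    (Function.support fun k : ℕ => (m.m (D^[k] η) (a + s * k) : ℤ)).Finite := by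
  obtain ⟨N, hN⟩ := exists_bound m
  refine (Set.finite_lt_nat N).subset fun k hk => ?_
  by_contra h
  exact hk (tail_term_eq_zero hs hN η a k (not_lt.mp h))

theorem tail_eq_sum {D : P → P} {s : ℕ} (hs : 1 ≤ s) {m : Param P} {N : ℕ}
    (hN : ∀ η a, N ≤ a → m.m η a = 0) (η : P) (a M : ℕ) (hM : N ≤ M) :
    tail D s m η a = ∑ k ∈ Finset.range M, (m.m (D^[k] η) (a + s * k) : ℤ) := by
  refine finsum_eq_sum_of_support_subset _ fun k hk => ?_
  by_contra h
  simp only [Finset.coe_range, Set.mem_Iio, not_lt] at h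
  exact hk (tail_term_eq_zero hs hN η a k (hM.trans h))

theorem tail_rec {D : P → P} {s : ℕ} (hs : 1 ≤ s) (m : Param P) (η : P) (a : ℕ) :
    tail D s m η a = m.m η a + tail D s m (D η) (a + s) := by
  obtain ⟨N, hN⟩ := exists_bound m
  rw [tail_eq_sum hs hN η a (N + 1) (by omega), tail_eq_sum hs hN (D η) (a + s) N le_rfl,
    Finset.sum_range_succ', add_comm]
  congr 1
  refine Finset.sum_congr rfl fun k _ => ?_
  rw [Function.iterate_succ_apply, show a + s * (k + 1) = a + s + s * k by ring]

theorem tail_eq_zero {D : P → P} {s : ℕ} {m : Param P} {N : ℕ}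
    (hN : ∀ η a, N ≤ a → m.m η a = 0) (η : P) (a : ℕ) (ha : N ≤ a) :
    tail D s m η a = 0 := by
  unfold tail
  simp only [hN _ _ (le_add_right ha), Nat.cast_zero, finsum_zero]

theorem Lam_disc {Pdisc : Set P} {D : P → P} (hD1 : ∀ η ∈ Pdisc, D η = η) (m m' : Param P)
    {η : P} (hη : η ∈ Pdisc) (a : ℕ) :
    Lam Pdisc D m m' η a = tail D 2 m η a - tail D 2 m' η (a + 1) := by
  rw [Lam, if_pos hη, tail, tail,
    ← finsum_sub_distrib (tail_support (by norm_num) _ _ _) (tail_support (by norm_num) _ _ _)]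
  refine finsum_congr fun k => ?_
  rw [Function.iterate_fixed (hD1 η hη), add_right_comm]

theorem Lam_cmpl {Pdisc : Set P} {D : P → P} (m m' : Param P)
    {η : P} (hη : η ∉ Pdisc) (a : ℕ) :
    Lam Pdisc D m m' η a = tail D 1 m η a - tail D 1 m' η (a + 1) := by
  rw [Lam, if_neg hη, tail, tail,
    ← finsum_sub_distrib (tail_support le_rfl _ _ _) (tail_support le_rfl _ _ _)]
  refine finsum_congr fun k => ?_
  rw [one_mul, add_right_comm]

/-- Uniqueness for the recursion satisfied by tail sums: a function that is invariant under
`(η, a) ↦ (D η, a + s)` on a `D`-stable set and vanishes for large `a` is zero there, for `a ≥ 1`. -/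
theorem eq_zero_of_shift {D : P → P} {s : ℕ} (hs : 1 ≤ s) {C : Set P} (hC : ∀ η ∈ C, D η ∈ C)
    (H : P → ℕ → ℤ) (hH : ∀ η ∈ C, ∀ a, 1 ≤ a → H η a = H (D η) (a + s))
    (N : ℕ) (hN : ∀ η a, N ≤ a → H η a = 0) :
    ∀ η ∈ C, ∀ a, 1 ≤ a → H η a = 0 := by
  have key : ∀ n η, η ∈ C → ∀ a, 1 ≤ a → N ≤ a + n → H η a = 0 := by
    intro n
    induction n with
    | zero => exact fun η _ a _ h => hN η a h
    | succ n ih =>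
      intro η hη a ha h
      rw [hH η hη a ha]
      exact ih _ (hC η hη) _ (by omega) (by omega)
  exact fun η hη a ha => key N η hη a ha (by omega)

/-! ### Relevance implies nonnegativity -/

section Necessity

variable {Pdisc : Set P} {D : P → P} {m m' : Param P}

theorem Lam_nonneg_of_relevant (hD1 : ∀ η ∈ Pdisc, D η = η) (hD2 : ∀ η ∉ Pdisc, D η ∉ Pdisc)
    (hD3 : ∀ η, D (D η) = η) (h : Relevant Pdisc D m m') (η : P) (a : ℕ) (ha : 1 ≤ a) :
    0 ≤ Lam Pdisc D m m' η a ∧ 0 ≤ Lam Pdisc D m' m η a := by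
  obtain ⟨fI, fJ, fK, m₀, hgen, hm, hK, hm'⟩ := h
  obtain ⟨N, hN⟩ := exists_bound m
  obtain ⟨N', hN'⟩ := exists_bound m'
  have bI : ∀ η a, N ≤ a → fI.m η a = 0 := fun η a h => by have := hm η a; have := hN η a h; omega
  have bJ : ∀ η a, N ≤ a → fJ.m η a = 0 := fun η a h => by have := hm η a; have := hN η a h; omega
  have bK : ∀ η a, N ≤ a → fK.m η a = 0 := fun η a h => by have := hm η a; have := hN η a h; omega
  by_cases hη : η ∈ Pdisc
  · rw [Lam_disc hD1 _ _ hη, Lam_disc hD1 _ _ hη]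
    -- `e1`, `e2` are the telescoped formulas for `Λ` on `P_disc`, with all terms on one side.
    have e1 := eq_zero_of_shift (D := D) (s := 2) (by norm_num) (C := Pdisc)
      (fun η h => by rwa [hD1 η h])
      (fun η a => tail D 2 m η a - tail D 2 m' η (a + 1) - fJ.m η a)
      (fun η hη a ha => by
        have h1 := tail_rec (D := D) (s := 2) (by norm_num) m η a
        have h2 := tail_rec (D := D) (s := 2) (by norm_num) m' η (a + 1)
        have h3 := hm η a
        have h4 := hm' η (a + 1) (by omega)
        have h5 := hgen η (a + 1) (by omega)
        simp only [hD1 η hη, hK η hη, Nat.add_sub_cancel] at *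
        rw [show a + 1 + 2 = a + 2 + 1 by ring] at h2
        rw [show a + 1 + 1 = a + 2 by ring] at h4
        omega)
      (N + N') (fun η a h => by
        simp [tail_eq_zero hN η a (by omega), tail_eq_zero hN' η (a + 1) (by omega),
          bJ η a (by omega)]) η hη a ha
    have e2 := eq_zero_of_shift (D := D) (s := 2) (by norm_num) (C := Pdisc)
      (fun η h => by rwa [hD1 η h])
      (fun η a => tail D 2 m' η a - tail D 2 m η (a + 1) - fI.m η (a - 1) - m₀.m η a)
      (fun η hη a ha => by
        have h1 := tail_rec (D := D) (s := 2) (by norm_num) m' η a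
        have h2 := tail_rec (D := D) (s := 2) (by norm_num) m η (a + 1)
        have h3 := hm η (a + 1)
        have h4 := hm' η a ha
        have h5 := hgen η (a + 2) (by omega)
        simp only [hD1 η hη, hK η hη] at *
        rw [show a + 1 + 2 = a + 2 + 1 by ring] at h2
        rw [show a + 2 - 1 = a + 1 by omega]
        omega)
      (N + N' + 2) (fun η a h => by
        simp [tail_eq_zero hN η (a + 1) (by omega), tail_eq_zero hN' η a (by omega),
          bI η (a - 1) (by omega), hgen η a (by omega)]) η hη a ha
    omega
  · rw [Lam_cmpl _ _ hη, Lam_cmpl _ _ hη]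
    -- The telescoped formulas on `P_cmpl`; invariance under the shift uses `D (D η) = η`.
    have e1 := eq_zero_of_shift (D := D) (s := 1) le_rfl (C := Pdiscᶜ) hD2
      (fun η a => tail D 1 m η a - tail D 1 m' η (a + 1)
        - fJ.m η a - fJ.m (D η) (a + 1) - fK.m η a)
      (fun η hη a ha => by
        have h1 := tail_rec (D := D) (s := 1) le_rfl m η a
        have h2 := tail_rec (D := D) (s := 1) le_rfl m' η (a + 1)
        have h3 := hm η a
        have h4 := hm' η (a + 1) (by omega)
        have h5 := hgen η (a + 1) (by omega)
        simp only [hD3, Nat.add_sub_cancel] at *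
        omega)
      (N + N') (fun η a h => by
        simp [tail_eq_zero hN η a (by omega), tail_eq_zero hN' η (a + 1) (by omega),
          bJ η a (by omega), bJ (D η) (a + 1) (by omega), bK η a (by omega)]) η hη a ha
    have e2 := eq_zero_of_shift (D := D) (s := 1) le_rfl (C := Pdiscᶜ) hD2
      (fun η a => tail D 1 m' η a - tail D 1 m η (a + 1)
        - fI.m η (a - 1) - fI.m (D η) a - fK.m (D η) a - m₀.m η a)
      (fun η hη a ha => by
        have h1 := tail_rec (D := D) (s := 1) le_rfl m' η a
        have h2 := tail_rec (D := D) (s := 1) le_rfl m η (a + 1)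
        have h3 := hm η (a + 1)
        have h4 := hm' η a ha
        have h5 := hgen (D η) (a + 1) (by omega)
        simp only [hD3, Nat.add_sub_cancel] at *
        omega)
      (N + N' + 2) (fun η a h => by
        simp [tail_eq_zero hN η (a + 1) (by omega), tail_eq_zero hN' η a (by omega),
          bI η (a - 1) (by omega), bI (D η) a (by omega), bK (D η) a (by omega),
          hgen η a (by omega)]) η hη a ha
    omega

end Necessity

/-! ### Nonnegativity implies relevance -/

section Sufficiency

/-- The parameter with multiplicity `g η a` for `a ≥ 1`, where `g` is dominated by a given
parameter; negative values are replaced by `0`. -/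
noncomputable def ofLe (g : P → ℕ → ℤ) (m : Param P) (hg : ∀ η a, 1 ≤ a → g η a ≤ m.m η a) :
    Param P where
  m η a := if a = 0 then 0 else (g η a).toNat
  zero _ := if_pos rfl
  finite := m.finite.subset fun p hp => by
    simp only [Set.mem_ofPred_eq, ne_eq, ite_eq_left_iff, not_forall] at hp ⊢
    obtain ⟨h0, h1⟩ := hp
    have := hg p.1 p.2 (by omega)
    omega

/-- Relevance from integer-valued data.  Since the summands are nonnegative, they are dominated by
`m` or `m'`, so finiteness of the supports is automatic.  The value `i η 0` plays the role of
`m₀(η, 1)`. -/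
theorem relevant_of_int {Pdisc : Set P} {D : P → P} {m m' : Param P} (i j k : P → ℕ → ℤ)
    (hi : ∀ η a, 0 ≤ i η a) (hj : ∀ η a, 1 ≤ a → 0 ≤ j η a) (hk : ∀ η a, 1 ≤ a → 0 ≤ k η a)
    (hm : ∀ η a, 1 ≤ a → i η a + j η a + k η a = m.m η a)
    (hK : ∀ η ∈ Pdisc, ∀ a, k η a = 0)
    (hm' : ∀ η a, 1 ≤ a → (m'.m η a : ℤ) = i η (a - 1) + j η (a + 1) + k (D η) a) :
    Relevant Pdisc D m m' := by
  refine ⟨ofLe i m fun η a ha => ?_, ofLe j m fun η a ha => ?_, ofLe k m fun η a ha => ?_,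
    ofLe (fun η a => if a = 1 then i η 0 else 0) m' fun η a ha => ?_, ?_, ?_, ?_, ?_⟩
  · linarith [hm η a ha, hj η a ha, hk η a ha]
  · linarith [hm η a ha, hi η a, hk η a ha]
  · linarith [hm η a ha, hi η a, hj η a ha]
  · split_ifs with h
    · subst h
      have := hm' η 1 le_rfl
      simp only [Nat.sub_self] at this
      linarith [hj η (1 + 1) (by omega), hk (D η) 1 le_rfl]
    · positivity
  · intro η a ha
    have h1 : a ≠ 1 := by omega
    simp [ofLe, h1]
  · intro η a
    rcases Nat.eq_zero_or_pos a with rfl | ha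
    · simp [ofLe, m.zero]
    · have := hm η a ha
      have := hi η a
      have := hj η a ha
      have := hk η a ha
      simp only [ofLe, ha.ne', if_false]
      omega
  · intro η hη a
    simp [ofLe, hK η hη]
  · intro η a ha
    have h0 := hm' η a ha
    have h1 := hi η (a - 1)
    have h2 := hj η (a + 1) (by omega)
    have h3 := hk (D η) a ha
    by_cases h : a = 1
    · subst h
      simp only [ofLe, Nat.sub_self, if_true, one_ne_zero, if_false] at *
      norm_num at *
      omega
    · have h4 : a - 1 ≠ 0 := by omega
      have h5 : a ≠ 0 := by omega
      simp only [ofLe, h4, h5, h, if_false, Nat.succ_ne_zero, Int.toNat_zero]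
      omega

variable (Pdisc : Set P) (D : P → P) (m m' : Param P)

/-- The solution for `f_I`: the number of summands of `m` at `(η, a)` matched one level up on
`P_cmpl`, and the value forced by `Λ` on `P_disc`.  At `a = 0` it is `m₀(η, 1)`. -/
noncomputable def upPart (η : P) (a : ℕ) : ℤ :=
  if η ∈ Pdisc then tail D 2 m' η (a + 1) - tail D 2 m η (a + 2)
  else max 0 (tail D 1 m' η (a + 1) - tail D 1 m (D η) (a + 1))

/-- The solution for `f_J`: the number of summands of `m` at `(η, a)` matched one level down (or
unmatched, if `a = 1`) on `P_cmpl`, and the value forced by `Λ` on `P_disc`. -/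
noncomputable def downPart (η : P) (a : ℕ) : ℤ :=
  if η ∈ Pdisc then tail D 2 m η a - tail D 2 m' η (a + 1)
  else max 0 (tail D 1 m η a - tail D 1 m' (D η) a)

/-- The solution for `f_K`: the number of summands of `m` at `(η, a)` matched at the same level
on `P_cmpl`, and `0` on `P_disc`. -/
noncomputable def flatPart (η : P) (a : ℕ) : ℤ :=
  if η ∈ Pdisc then 0
  else min (tail D 1 m η a) (tail D 1 m' (D η) a)
    - max (tail D 1 m (D η) (a + 1)) (tail D 1 m' η (a + 1))

variable {Pdisc D m m'}

theorem relevant_of_Lam_nonneg (hD1 : ∀ η ∈ Pdisc, D η = η) (hD2 : ∀ η ∉ Pdisc, D η ∉ Pdisc)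
    (hD3 : ∀ η, D (D η) = η)
    (h : ∀ (η : P) (a : ℕ), 1 ≤ a →
      0 ≤ Lam Pdisc D m m' η a ∧ 0 ≤ Lam Pdisc D m' m η a) :
    Relevant Pdisc D m m' := by
  refine relevant_of_int (upPart Pdisc D m m') (downPart Pdisc D m m') (flatPart Pdisc D m m')
    (fun η a => ?_) (fun η a ha => ?_) (fun η a ha => ?_) (fun η a ha => ?_) (fun η hη a => ?_)
    (fun η a ha => ?_)
  · unfold upPart
    split_ifs with hη
    · simpa only [Lam_disc hD1 _ _ hη] using (h η (a + 1) (by omega)).2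
    · exact le_max_left _ _
  · unfold downPart
    split_ifs with hη
    · simpa only [Lam_disc hD1 _ _ hη] using (h η a ha).1
    · exact le_max_left _ _
  · unfold flatPart
    split_ifs with hη
    · exact le_rfl
    · have h1 := (h η a ha).1
      have h2 := (h (D η) a ha).2
      rw [Lam_cmpl _ _ hη] at h1
      rw [Lam_cmpl _ _ (hD2 η hη)] at h2
      have h3 := tail_rec (D := D) le_rfl m η a
      have h4 := tail_rec (D := D) le_rfl m' (D η) a
      -- Each of the two minimands bounds each of the two maximands.
      rw [hD3] at h4
      omega
  · unfold upPart downPart flatPart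
    split_ifs with hη
    · have h1 := tail_rec (D := D) (s := 2) (by norm_num) m η a
      rw [hD1 η hη] at h1
      omega
    · have h1 := tail_rec (D := D) le_rfl m η a
      omega
  · exact if_pos hη
  · have ha' : a - 1 + 1 = a := by omega
    have ha'' : a - 1 + 2 = a + 1 := by omega
    unfold upPart downPart flatPart
    by_cases hη : η ∈ Pdisc
    · have h1 := tail_rec (D := D) (s := 2) (by norm_num) m' η a
      simp only [hD1 η hη, hη, if_true, ha', ha''] at h1 ⊢
      rw [show a + 1 + 1 = a + 2 by ring]
      omega
    · have h1 := tail_rec (D := D) le_rfl m' η a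
      simp only [hη, hD2 η hη, if_false, ha', hD3]
      omega

end Sufficiency

end RelevantParam

/-- `m` and `m'` are relevant iff `Λ(η,a;m,m') ≥ 0` and
`Λ(η,a;m',m) ≥ 0` for every `η ∈ P` and every `a ∈ ℤ_{>0}`. -/
theorem relevant_iff_lambda_nonneg {P : Type*} (Pdisc : Set P) (D : P → P)
    (hD1 : ∀ η ∈ Pdisc, D η = η)
    (hD2 : ∀ η ∉ Pdisc, D η ∉ Pdisc)
    (hD3 : ∀ η, D (D η) = η)
    (m m' : Param P) :
    Relevant Pdisc D m m' ↔
      ∀ (η : P) (a : ℕ), 1 ≤ a →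
        0 ≤ Lam Pdisc D m m' η a ∧ 0 ≤ Lam Pdisc D m' m η a := by
  exact ⟨fun h η a ha => RelevantParam.Lam_nonneg_of_relevant hD1 hD2 hD3 h η a ha,
    RelevantParam.relevant_of_Lam_nonneg hD1 hD2 hD3⟩
end

section
/- Suppose the finitely supported functions f_I, f_J, f_K : P × ℤ_{>0} → ℕ and the generic parameter m₀ witness the relevance of parameters m and m', i.e. f_I + f_J + f_K = m, f_K(η,a) = 0 whenever η ∈ P_disc, and m'(η,a) = f_I(η,a−1) + f_J(η,a+1) + f_K(D(η),a) + m₀(η,a) for all η and a ≥ 1 (with f_I(η,0) read as 0). Then for every η ∈ P_disc and every a ∈ ℤ_{>0}, Λ(η,a;m,m') = f_J(η,a). -/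
/-!
On `P_disc` the map `D` is trivial and `fK` vanishes, and `m₀` vanishes at the indices
`a + 2k + 1 ≥ 2`. Hence the `fI`-contributions to `m` and `m'` cancel, and the `k`-th summand of
`Lam` is `fJ(η, a + 2k) - fJ(η, a + 2(k + 1))`. The sum telescopes to `fJ(η, a)`, because `fJ` is
finitely supported.
-/

open scoped Classical

theorem finsum_sub_succ_of_eventually_zero (g : ℕ → ℤ) (N : ℕ) (hN : ∀ n, N ≤ n → g n = 0) :
    ∑ᶠ k : ℕ, (g k - g (k + 1)) = g 0 := by
  rw [finsum_eq_sum_of_support_subset (s := Finset.range N), Finset.sum_range_sub', hN N le_rfl,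
    sub_zero]
  intro k hk
  by_contra hkN
  have h : N ≤ k := by simpa using hkN
  exact hk (by simp [hN k h, hN (k + 1) (by omega)])

theorem Param.exists_bound {P : Type*} (f : Param P) (η : P) :
    ∃ N, ∀ n, N ≤ n → f.m η n = 0 := by
  obtain ⟨N, hN⟩ := (f.finite.image Prod.snd).bddAbove
  refine ⟨N + 1, fun n hn => ?_⟩
  by_contra h
  have : n ≤ N := hN ⟨(η, n), h, rfl⟩
  omega

/-- if `f_I, f_J, f_K, m₀` witness the relevance of `m` and `m'`,
then `Λ(η,a;m,m') = f_J(η,a)` for every `η ∈ P_disc` and `a ≥ 1`. -/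
theorem lambda_eq_of_witness_disc {P : Type*} (Pdisc : Set P) (D : P → P)
    (hD1 : ∀ η ∈ Pdisc, D η = η)
    (hD2 : ∀ η ∉ Pdisc, D η ∉ Pdisc)
    (hD3 : ∀ η, D (D η) = η)
    (m m' fI fJ fK m₀ : Param P)
    (hgen : m₀.Generic)
    (hsum : ∀ η a, fI.m η a + fJ.m η a + fK.m η a = m.m η a)
    (hK : ∀ η ∈ Pdisc, ∀ a, fK.m η a = 0)
    (hm' : ∀ η a, 1 ≤ a →
      m'.m η a = fI.m η (a - 1) + fJ.m η (a + 1) + fK.m (D η) a + m₀.m η a) :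
    ∀ η ∈ Pdisc, ∀ a : ℕ, 1 ≤ a →
      Lam Pdisc D m m' η a = (fJ.m η a : ℤ) := by
  intro η hη a ha
  obtain ⟨N, hN⟩ := fJ.exists_bound η
  have hterm : ∀ k : ℕ, (m.m η (a + 2 * k) : ℤ) - (m'.m η (a + 2 * k + 1) : ℤ) =
      (fJ.m η (a + 2 * k) : ℤ) - (fJ.m η (a + 2 * (k + 1)) : ℤ) := by
    intro k
    rw [← hsum, hm' η _ (by omega), hD1 η hη, hK η hη, hK η hη, hgen η _ (by omega),
      Nat.add_sub_cancel, show a + 2 * k + 1 + 1 = a + 2 * (k + 1) by ring]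
    push_cast
    ring
  rw [Lam, if_pos hη, finsum_congr hterm,
    finsum_sub_succ_of_eventually_zero (fun k => (fJ.m η (a + 2 * k) : ℤ)) N
      (fun n hn => by simp [hN (a + 2 * n) (by omega)])]
  simp
end

section
/- Let m and m' be parameters such that Λ(η,a;m',m) ≥ 0 for every η ∈ P and every a ∈ ℤ_{>0}. Let d ≥ 2 be an integer such that m(η,b) = 0 and m'(η,b) = 0 for every η ∈ P and every b > d. Then for every L ∈ P: if L ∈ P_disc then m'(L, d−1) ≥ m(L, d), and if L ∈ P_cmpl then m'(L, d−1) + m'(D(L), d) ≥ m(L, d). -/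
/-! The bound is the inequality `0 ≤ Λ(L, d - 1; m', m)`. Since both parameters vanish above
level `d`, that sum equals `m'(L, d - 1) - m(L, d)` for `L ∈ P_disc`, and
`m'(L, d - 1) - m(L, d) + m'(D L, d)` for `L ∈ P_cmpl`. -/

open scoped Classical

/-- if `Λ(η,a;m',m) ≥ 0` for all `η, a ≥ 1`, and both `m` and `m'`
vanish at all `b > d` with `d ≥ 2`, then for every `L`:
if `L ∈ P_disc` then `m'(L,d-1) ≥ m(L,d)`, and if `L ∈ P_cmpl` then
`m'(L,d-1) + m'(D L, d) ≥ m(L,d)`. -/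
theorem top_multiplicity_bound {P : Type*} (Pdisc : Set P) (D : P → P)
    (hD1 : ∀ η ∈ Pdisc, D η = η)
    (hD2 : ∀ η ∉ Pdisc, D η ∉ Pdisc)
    (hD3 : ∀ η, D (D η) = η)
    (m m' : Param P)
    (hpos : ∀ (η : P) (a : ℕ), 1 ≤ a → 0 ≤ Lam Pdisc D m' m η a)
    (d : ℕ) (hd : 2 ≤ d)
    (hvan : ∀ (η : P) (b : ℕ), d < b → m.m η b = 0 ∧ m'.m η b = 0) :
    ∀ L : P,
      (L ∈ Pdisc → m.m L d ≤ m'.m L (d - 1)) ∧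
      (L ∉ Pdisc → m.m L d ≤ m'.m L (d - 1) + m'.m (D L) d) := by
  intro L
  obtain ⟨e, rfl⟩ : ∃ e, d = e + 1 := ⟨d - 1, by lia⟩
  have hL := hpos L e (by lia)
  unfold Lam at hL
  constructor <;> intro h
  · -- Only `k = 0` survives, since `e + 2 * k > e + 1` for `k ≥ 1`.
    rw [if_pos h, finsum_eq_single _ 0] at hL
    · simp only [Nat.add_sub_cancel]
      simpa using hL
    · intro k hk
      rw [(hvan L (e + 2 * k) (by lia)).2, (hvan L (e + 2 * k + 1) (by lia)).1]
      simp
  · -- Only `k = 0` and `k = 1` survive, and the term `m (D L, e + 2)` at `k = 1` vanishes.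
    rw [if_neg h, finsum_eq_sum_of_support_subset (s := Finset.range 2)] at hL
    · simp only [Finset.sum_range_succ, Finset.sum_range_zero, Function.iterate_zero, id,
        Function.iterate_one, (hvan (D L) (e + 1 + 1) (by lia)).1] at hL
      simp only [Nat.add_sub_cancel]
      push_cast at hL
      simp only [add_zero] at hL
      lia
    · intro k hk
      by_contra hk2
      simp only [Finset.coe_range, Set.mem_Iio, not_lt] at hk2
      apply hk
      beta_reduce
      rw [(hvan _ (e + k) (by lia)).2, (hvan _ (e + k + 1) (by lia)).1]
      simp
end

section
/- Let m, m' be parameters, L ∈ P and d ∈ ℤ_{>0} with m(L,d) ≥ 1 and m'(L,d+1) ≥ 1, and set m₀ = m − 1_{(L,d)}, m₀' = m' − 1_{(L,d+1)}. Then Λ(η,a;m₀',m₀) = Λ(η,a;m',m) for every pair (η,a) other than (L, d+1) and, in case L ∈ P_cmpl, other than (D(L), d); moreover Λ(L,d+1;m₀',m₀) = Λ(L,d+1;m',m) − 1 and, when L ∈ P_cmpl, Λ(D(L),d;m₀',m₀) = Λ(D(L),d;m',m) − 1. If in addition m(η,b) = 0 for every η ∈ P and every b > d, then Λ(L,d+1;m₀',m₀)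 ≥ 0 and, when L ∈ P_cmpl, Λ(D(L),d;m₀',m₀) ≥ 0. -/
/-!
Both branches of `Lam` have the form `∑ᶠ k, (m' (x k) (b k) - m (x k) (b k + 1))` along a path
`k ↦ (x k, b k)` whose second coordinate `b` is injective. Such a path meets each point of
`P × ℕ` at most once, so removing `(L, d + 1)` from `m'` and `(L, d)` from `m` changes the sum by
`-[the path meets (L, d + 1)] + [the path meets (L, d - 1)]` (`finsum_path_removal`).

In both branches two units of `b` bring `x` back to itself (trivially on `P_disc`, and because
`D ∘ D = id` on `P_cmpl`). Hence a path through `(L, d - 1)` also meets `(L, d + 1)`, and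
conversely unless the path starts too late, i.e. at `(L, d + 1)` itself or, on `P_cmpl`, one step
before it, at `(D L, d)`. There the first bracket survives alone and the sum drops by one.

Nonnegativity is immediate: if `m` vanishes above `d`, so does `m₀`, and on the paths starting at
`(L, d + 1)` and `(D L, d)` only values of `m₀` above `d` are subtracted.
-/

open scoped Classical

lemma Param.finite_support_path {P : Type*} (m : Param P) (x : ℕ → P) {b : ℕ → ℕ}
    (hb : b.Injective) : (Function.support fun k => (m.m (x k) (b k) : ℤ)).Finite := by
  have h := m.finite.preimage (f := fun k => (x k, b k))
    (Function.Injective.injOn fun i j hij => hb (Prod.ext_iff.1 hij).2)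
  refine h.subset fun k hk => ?_
  simpa using hk

lemma finsum_path_indicator {P : Type*} (x : ℕ → P) {b : ℕ → ℕ} (hb : b.Injective)
    (L : P) (n : ℕ) :
    ∑ᶠ k, (if x k = L ∧ b k = n then (1 : ℤ) else 0) =
      if ∃ k, x k = L ∧ b k = n then 1 else 0 := by
  by_cases h : ∃ k, x k = L ∧ b k = n
  · obtain ⟨k, hk⟩ := h
    rw [finsum_eq_single _ k, if_pos hk, if_pos ⟨k, hk⟩]
    intro j hj
    rw [if_neg]
    rintro ⟨-, hj'⟩
    exact hj (hb (hj'.trans hk.2.symm))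
  · rw [if_neg h]
    push Not at h
    refine (finsum_congr fun k => if_neg ?_).trans finsum_zero
    rintro ⟨h1, h2⟩
    exact h k h1 h2

lemma finite_support_path_indicator {P : Type*} (x : ℕ → P) {b : ℕ → ℕ} (hb : b.Injective)
    (L : P) (n : ℕ) :
    (Function.support fun k => if x k = L ∧ b k = n then (1 : ℤ) else 0).Finite := by
  refine ((Set.finite_singleton n).preimage hb.injOn).subset fun k hk => ?_
  by_contra hn
  exact hk (if_neg fun h => hn h.2)

/-- Effect of the removal on a sum along a path: each removed point counts once if the path meets
it. The condition `b k + 1 = d` encodes meeting `(L, d - 1)` without truncated subtraction. -/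
lemma finsum_path_removal {P : Type*} {m m' m₀ m₀' : Param P} {L : P} {d : ℕ}
    (hm₀ : ∀ η a, (m₀.m η a : ℤ)
      = (m.m η a : ℤ) - (if η = L ∧ a = d then 1 else 0))
    (hm₀' : ∀ η a, (m₀'.m η a : ℤ)
      = (m'.m η a : ℤ) - (if η = L ∧ a = d + 1 then 1 else 0))
    (x : ℕ → P) {b : ℕ → ℕ} (hb : b.Injective) :
    ∑ᶠ k, ((m₀'.m (x k) (b k) : ℤ) - (m₀.m (x k) (b k + 1) : ℤ)) =
      ∑ᶠ k, ((m'.m (x k) (b k) : ℤ) - (m.m (x k) (b k + 1) : ℤ))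
        - (if ∃ k, x k = L ∧ b k = d + 1 then 1 else 0)
        + (if ∃ k, x k = L ∧ b k + 1 = d then 1 else 0) := by
  have hb1 : (fun k => b k + 1).Injective := fun i j hij => hb (Nat.succ_injective hij)
  rw [finsum_sub_distrib (m₀'.finite_support_path x hb) (m₀.finite_support_path x hb1),
    finsum_sub_distrib (m'.finite_support_path x hb) (m.finite_support_path x hb1)]
  simp only [hm₀, hm₀']
  rw [finsum_sub_distrib (m'.finite_support_path x hb) (finite_support_path_indicator x hb _ _),
    finsum_sub_distrib (m.finite_support_path x hb1) (finite_support_path_indicator x hb1 _ _),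
    finsum_path_indicator x hb, finsum_path_indicator x hb1]
  ring

lemma Lam_removal_of_mem {P : Type*} {Pdisc : Set P} {D : P → P} {m m' m₀ m₀' : Param P}
    {L : P} {d : ℕ}
    (hm₀ : ∀ η a, (m₀.m η a : ℤ)
      = (m.m η a : ℤ) - (if η = L ∧ a = d then 1 else 0))
    (hm₀' : ∀ η a, (m₀'.m η a : ℤ)
      = (m'.m η a : ℤ) - (if η = L ∧ a = d + 1 then 1 else 0))
    {η : P} (hη : η ∈ Pdisc) (a : ℕ) :
    Lam Pdisc D m₀' m₀ η a = Lam Pdisc D m' m η a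
        - (if ∃ k, η = L ∧ a + 2 * k = d + 1 then 1 else 0)
        + (if ∃ k, η = L ∧ a + 2 * k + 1 = d then 1 else 0) := by
  simp only [Lam, if_pos hη]
  exact finsum_path_removal hm₀ hm₀' (fun _ => η) (b := fun k => a + 2 * k)
    fun i j hij => by simpa using hij

lemma Lam_removal_of_notMem {P : Type*} {Pdisc : Set P} {D : P → P} {m m' m₀ m₀' : Param P}
    {L : P} {d : ℕ}
    (hm₀ : ∀ η a, (m₀.m η a : ℤ)
      = (m.m η a : ℤ) - (if η = L ∧ a = d then 1 else 0))
    (hm₀' : ∀ η a, (m₀'.m η a : ℤ)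
      = (m'.m η a : ℤ) - (if η = L ∧ a = d + 1 then 1 else 0))
    {η : P} (hη : η ∉ Pdisc) (a : ℕ) :
    Lam Pdisc D m₀' m₀ η a = Lam Pdisc D m' m η a
        - (if ∃ k, D^[k] η = L ∧ a + k = d + 1 then 1 else 0)
        + (if ∃ k, D^[k] η = L ∧ a + k + 1 = d then 1 else 0) := by
  simp only [Lam, if_neg hη]
  exact finsum_path_removal hm₀ hm₀' (fun k => D^[k] η) (b := fun k => a + k)
    fun i j hij => by simpa using hij

/-- A `Lam` value is nonnegative when the subtracted parameter vanishes above the starting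
index. -/
lemma Lam_nonneg {P : Type*} {Pdisc : Set P} {D : P → P} {m m' : Param P} {η : P} {a : ℕ}
    (h : ∀ (ζ : P) (b : ℕ), a < b → m.m ζ b = 0) : 0 ≤ Lam Pdisc D m' m η a := by
  unfold Lam
  split_ifs
  · exact finsum_nonneg fun k => by rw [h _ _ (by omega)]; simp
  · exact finsum_nonneg fun k => by rw [h _ _ (by omega)]; simp

/-- with `m₀ = m - 1_{(L,d)}` and `m₀' = m' - 1_{(L,d+1)}`,
the values `Λ(η,a;m₀',m₀)` agree with `Λ(η,a;m',m)` away from `(L,d+1)`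
(and away from `(D L, d)` in case `L ∈ P_cmpl`), drop by `1` at those pairs,
and remain nonnegative there if `m` vanishes above `d`. -/
theorem lambda_drop_under_removal {P : Type*} (Pdisc : Set P) (D : P → P)
    (hD1 : ∀ η ∈ Pdisc, D η = η)
    (hD2 : ∀ η ∉ Pdisc, D η ∉ Pdisc)
    (hD3 : ∀ η, D (D η) = η)
    (m m' m₀ m₀' : Param P) (L : P) (d : ℕ) (hd : 1 ≤ d)
    (hmLd : 1 ≤ m.m L d) (hm'Ld : 1 ≤ m'.m L (d + 1))
    (hm₀ : ∀ η a, (m₀.m η a : ℤ)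
      = (m.m η a : ℤ) - (if η = L ∧ a = d then 1 else 0))
    (hm₀' : ∀ η a, (m₀'.m η a : ℤ)
      = (m'.m η a : ℤ) - (if η = L ∧ a = d + 1 then 1 else 0)) :
    (∀ (η : P) (a : ℕ), 1 ≤ a → (η, a) ≠ (L, d + 1) →
        (L ∉ Pdisc → (η, a) ≠ (D L, d)) →
        Lam Pdisc D m₀' m₀ η a = Lam Pdisc D m' m η a) ∧
    Lam Pdisc D m₀' m₀ L (d + 1) = Lam Pdisc D m' m L (d + 1) - 1 ∧
    (L ∉ Pdisc →
      Lam Pdisc D m₀' m₀ (D L) d = Lam Pdisc D m' m (D L) d - 1) ∧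
    ((∀ (η : P) (b : ℕ), d < b → m.m η b = 0) →
      0 ≤ Lam Pdisc D m₀' m₀ L (d + 1) ∧
      (L ∉ Pdisc → 0 ≤ Lam Pdisc D m₀' m₀ (D L) d)) := by
  have hDL : ∀ {η}, D η = L → η = D L := fun {η} h => by rw [← h, hD3]
  have hper : ∀ (k : ℕ) (η : P), D^[k + 2] η = D^[k] η := fun k η => by
    rw [Function.iterate_add_apply]
    simp [hD3]
  have hstay : ∀ (k : ℕ) (η : P), η ∉ Pdisc → D^[k] η ∉ Pdisc := by
    intro k η h
    induction k with
    | zero => exact h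
    | succ k ih =>
      rw [Function.iterate_succ_apply']
      exact hD2 _ ih
  refine ⟨fun η a _ hne hne' => ?_, ?_, fun hL => ?_, fun hv => ?_⟩
  · by_cases hη : η ∈ Pdisc
    · have key : (∃ k, η = L ∧ a + 2 * k = d + 1) ↔ ∃ k, η = L ∧ a + 2 * k + 1 = d := by
        constructor
        · rintro ⟨k, rfl, hk⟩
          rcases k with _ | k
          · exact absurd (by rw [← hk]; rfl) hne
          · exact ⟨k, rfl, by omega⟩
        · rintro ⟨k, rfl, hk⟩
          exact ⟨k + 1, rfl, by omega⟩
      rw [Lam_removal_of_mem hm₀ hm₀' hη]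
      simp only [key]
      ring
    · have key : (∃ k, D^[k] η = L ∧ a + k = d + 1) ↔ ∃ k, D^[k] η = L ∧ a + k + 1 = d := by
        constructor
        · rintro ⟨k, hkL, hk⟩
          rcases k with _ | _ | k
          · exact absurd (Prod.ext hkL hk) hne
          · exact absurd (Prod.ext (hDL hkL) (by simpa using hk))
              (hne' (hkL ▸ hstay 1 η hη))
          · exact ⟨k, (hper k η).symm.trans hkL, by omega⟩
        · rintro ⟨k, hkL, hk⟩
          exact ⟨k + 2, (hper k η).trans hkL, by omega⟩
      rw [Lam_removal_of_notMem hm₀ hm₀' hη]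
      simp only [key]
      ring
  · by_cases hL : L ∈ Pdisc
    · rw [Lam_removal_of_mem hm₀ hm₀' hL, if_pos ⟨0, rfl, rfl⟩, if_neg, add_zero]
      rintro ⟨k, -, hk⟩
      omega
    · rw [Lam_removal_of_notMem hm₀ hm₀' hL, if_pos ⟨0, rfl, rfl⟩, if_neg, add_zero]
      rintro ⟨k, -, hk⟩
      omega
  · rw [Lam_removal_of_notMem hm₀ hm₀' (hD2 L hL), if_pos ⟨1, hD3 L, rfl⟩, if_neg, add_zero]
    rintro ⟨k, -, hk⟩
    omega
  · have hv₀ : ∀ (η : P) (b : ℕ), d < b → m₀.m η b = 0 := fun η b hb => by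
      have h := hm₀ η b
      rw [hv η b hb, if_neg (by omega)] at h
      simpa using h
    exact ⟨Lam_nonneg fun ζ b hb => hv₀ ζ b (by omega), fun _ => Lam_nonneg hv₀⟩
end

section
/- The relevance relation on parameters is symmetric: if parameters m and m' are relevant, then m' and m are relevant. -/
/-!
The data witnessing relevance of `m` and `m'` can be reversed. A shift up by one (the summands `fI`)
is undone by a shift down and vice versa, so the new `I`-part is `fJ` shifted down and the new
`J`-part is `fI` shifted up; the new `K`-part is `fK` transported along the involution `D`.
Two boundary terms remain, both in degree `1`. The generic part `m₀` of `m'` joins the new `J`-part,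
where shifting it down sends it to degree `0`, so it contributes nothing. The summands `fJ η 1`,
which contributed nothing to `m'`, become the new generic part.
All new parts are bounded by `m'` or by `fJ`, which gives finiteness of their supports.
-/

open scoped Classical

/-- A function vanishing at index `0` and bounded by a parameter is itself a parameter. -/
def Param.ofLE {P : Type*} (n : Param P) (f : P → ℕ → ℕ)
    (h0 : ∀ η, f η 0 = 0) (h : ∀ η a, f η a ≤ n.m η a) : Param P where
  m := f
  zero := h0
  finite := n.finite.subset fun p hp => by
    have := h p.1 p.2
    simp only [Set.mem_ofPred_eq] at hp ⊢
    omega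


/-- relevance is symmetric. -/
theorem relevant_symm {P : Type*} (Pdisc : Set P) (D : P → P)
    (hD1 : ∀ η ∈ Pdisc, D η = η)
    (hD2 : ∀ η ∉ Pdisc, D η ∉ Pdisc)
    (hD3 : ∀ η, D (D η) = η)
    (m m' : Param P) (h : Relevant Pdisc D m m') :
    Relevant Pdisc D m' m := by
  obtain ⟨fI, fJ, fK, m₀, hgen, hm, hK, hm'⟩ := h
  -- The decomposition of `m'` into the new parts also holds at index `0`, where every term vanishes.
  have key : ∀ η a, (if a = 0 then 0 else fJ.m η (a + 1)) + (fI.m η (a - 1) + m₀.m η a)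
      + fK.m (D η) a = m'.m η a := by
    intro η a
    rcases Nat.eq_zero_or_pos a with rfl | ha
    · simp [fI.zero, m₀.zero, fK.zero, m'.zero]
    · rw [hm' η a ha, if_neg ha.ne']
      omega
  refine ⟨m'.ofLE (fun η a => if a = 0 then 0 else fJ.m η (a + 1)) (by simp)
      (fun η a => by have := key η a; omega),
    m'.ofLE (fun η a => fI.m η (a - 1) + m₀.m η a) (by simp [fI.zero, m₀.zero])
      (fun η a => by have := key η a; omega),
    m'.ofLE (fun η a => fK.m (D η) a) (fun η => fK.zero _)
      (fun η a => by have := key η a; omega),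
    fJ.ofLE (fun η a => if a = 1 then fJ.m η a else 0) (by simp)
      (fun η a => by split_ifs <;> simp),
    fun η a ha => if_neg (by omega), key, fun η hη a => ?_, fun η a ha => ?_⟩
  · change fK.m (D η) a = 0
    rw [hD1 η hη, hK η hη]
  · change m.m η a = (if a - 1 = 0 then 0 else fJ.m η (a - 1 + 1))
      + (fI.m η (a + 1 - 1) + m₀.m η (a + 1)) + fK.m (D (D η)) a
      + (if a = 1 then fJ.m η a else 0)
    rw [hD3, hgen η (a + 1) (by omega), ← hm η a, Nat.sub_add_cancel ha, Nat.add_sub_cancel]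
    split_ifs <;> omega
end

section
/- Relevance of parameters is preserved under the following elementary augmentations: if m and m' are relevant parameters, L ∈ P and d ∈ ℤ_{>0}, then each of the following pairs is relevant: (a) (m + 1_{(L,d)}, m' + 1_{(L,d+1)}); (b) (m + 1_{(L,d)}, m' + 1_{(L,d−1)}) provided d ≥ 2; (c) (m + 1_{(L,1)}, m'); (d) (m + 1_{(L,d)}, m' + 1_{(D(L),d)}) provided L ∈ P_cmpl; (e) (m, m' + 1_{(L,1)}). -/
/-!
Relevance of `m` and `m'` is witnessed by a splitting `m = f_I + f_J + f_K` together with a generic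
parameter `m₀`. In each case the new witness is the old one with a single summand added to one of
these four functions: `f_I` moves `L ⊠ S_d` up to `L ⊠ S_{d+1}` in case (a), `f_J` moves it down to
`L ⊠ S_{d-1}` in case (b) and makes `L ⊠ S_1` disappear in case (c), `f_K` replaces it by
`D(L) ⊠ S_d` in case (d), and `m₀` absorbs an additional `L ⊠ S_1` on the primed side in case (e).
-/

open scoped Classical

/-- The parameter `f + 1_{(L,d)}`, for `d ≥ 1`. -/
noncomputable def Param.addSingle {P : Type*} (f : Param P) (L : P) (d : ℕ) (hd : 1 ≤ d) :
    Param P where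
  m η a := f.m η a + (if η = L ∧ a = d then 1 else 0)
  zero η := by
    have h : ¬ (η = L ∧ 0 = d) := by omega
    simp [f.zero, h]
  finite := by
    refine (f.finite.union (Set.finite_singleton (L, d))).subset ?_
    rintro ⟨η, a⟩ h
    by_cases h' : η = L ∧ a = d
    · right
      simp [h'.1, h'.2]
    · left
      simpa [h'] using h

/-- relevance is preserved under the elementary augmentations
(a) `(m + 1_{(L,d)}, m' + 1_{(L,d+1)})`;
(b) `(m + 1_{(L,d)}, m' + 1_{(L,d-1)})` provided `d ≥ 2`;
(c) `(m + 1_{(L,1)}, m')`;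
(d) `(m + 1_{(L,d)}, m' + 1_{(D L,d)})` provided `L ∈ P_cmpl`;
(e) `(m, m' + 1_{(L,1)})`. -/
theorem relevant_augment {P : Type*} (Pdisc : Set P) (D : P → P)
    (hD1 : ∀ η ∈ Pdisc, D η = η)
    (hD2 : ∀ η ∉ Pdisc, D η ∉ Pdisc)
    (hD3 : ∀ η, D (D η) = η)
    (m m' : Param P) (hrel : Relevant Pdisc D m m')
    (L : P) (d : ℕ) (hd : 1 ≤ d) :
    (∀ m₁ m₁' : Param P,
      (∀ η a, m₁.m η a = m.m η a + (if η = L ∧ a = d then 1 else 0)) →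
      (∀ η a, m₁'.m η a = m'.m η a + (if η = L ∧ a = d + 1 then 1 else 0)) →
      Relevant Pdisc D m₁ m₁') ∧
    (2 ≤ d → ∀ m₁ m₁' : Param P,
      (∀ η a, m₁.m η a = m.m η a + (if η = L ∧ a = d then 1 else 0)) →
      (∀ η a, m₁'.m η a = m'.m η a + (if η = L ∧ a = d - 1 then 1 else 0)) →
      Relevant Pdisc D m₁ m₁') ∧
    (∀ m₁ : Param P,
      (∀ η a, m₁.m η a = m.m η a + (if η = L ∧ a = 1 then 1 else 0)) →
      Relevant Pdisc D m₁ m') ∧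
    (L ∉ Pdisc → ∀ m₁ m₁' : Param P,
      (∀ η a, m₁.m η a = m.m η a + (if η = L ∧ a = d then 1 else 0)) →
      (∀ η a, m₁'.m η a = m'.m η a + (if η = D L ∧ a = d then 1 else 0)) →
      Relevant Pdisc D m₁ m₁') ∧
    (∀ m₁' : Param P,
      (∀ η a, m₁'.m η a = m'.m η a + (if η = L ∧ a = 1 then 1 else 0)) →
      Relevant Pdisc D m m₁') := by
  obtain ⟨fI, fJ, fK, m₀, hgen, hsum, hK, hm'⟩ := hrel
  refine ⟨?_, ?_, ?_, ?_, ?_⟩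
  · intro m₁ m₁' h₁ h₁'
    refine ⟨fI.addSingle L d hd, fJ, fK, m₀, hgen, fun η a => ?_, hK, fun η a ha => ?_⟩
    · simp only [Param.addSingle, h₁, ← hsum]
      omega
    · have e : a - 1 = d ↔ a = d + 1 := by omega
      simp only [Param.addSingle, h₁', hm' η a ha, e]
      omega
  · intro hd2 m₁ m₁' h₁ h₁'
    refine ⟨fI, fJ.addSingle L d hd, fK, m₀, hgen, fun η a => ?_, hK, fun η a ha => ?_⟩
    · simp only [Param.addSingle, h₁, ← hsum]
      omega
    · have e : a + 1 = d ↔ a = d - 1 := by omega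
      simp only [Param.addSingle, h₁', hm' η a ha, e]
      omega
  · intro m₁ h₁
    refine ⟨fI, fJ.addSingle L 1 le_rfl, fK, m₀, hgen, fun η a => ?_, hK, fun η a ha => ?_⟩
    · simp only [Param.addSingle, h₁, ← hsum]
      omega
    · -- The new summand of `f_J` would land at index `0`, which the relation does not see.
      have e : ¬ (η = L ∧ a + 1 = 1) := by omega
      simp only [Param.addSingle, hm' η a ha, if_neg e]
      omega
  · intro hL m₁ m₁' h₁ h₁'
    refine ⟨fI, fJ, fK.addSingle L d hd, m₀, hgen, fun η a => ?_, fun η hη a => ?_,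
      fun η a ha => ?_⟩
    · simp only [Param.addSingle, h₁, ← hsum]
      omega
    · have e : ¬ (η = L ∧ a = d) := fun h => hL (h.1 ▸ hη)
      simp only [Param.addSingle, hK η hη a, if_neg e]
    · have e : D η = L ↔ η = D L :=
        ⟨fun h => by rw [← h, hD3], fun h => by rw [h, hD3]⟩
      simp only [Param.addSingle, h₁', hm' η a ha, e]
      omega
  · intro m₁' h₁'
    refine ⟨fI, fJ, fK, m₀.addSingle L 1 le_rfl, fun η a ha => ?_, hsum, hK, fun η a ha => ?_⟩
    · have e : ¬ (η = L ∧ a = 1) := by omega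
      simp only [Param.addSingle, hgen η a ha, if_neg e]
    · simp only [Param.addSingle, h₁', hm' η a ha]
      omega
end
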